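/- For every τ in the upper half-plane and all x, y ∈ ℂ, one has θ₃((x+y)/2, τ/2)·θ₄((x−y)/2, τ/2) = θ₄(x,τ)·θ₄(y,τ) − θ₁(x,τ)·θ₁(y,τ). -/

import Mathlib

open Complex

/-- Jacobi theta function θ₁(z,τ), with nome `q = exp(iπτ)`. -/
noncomputable def theta1 (z τ : ℂ) : ℂ :=
  -I * ∑' n : ℤ, (-1 : ℂ) ^ n * Complex.exp ((Real.pi : ℂ) * I * τ * ((n : ℂ) + 1 / 2) ^ 2) *
    Complex.exp (I * (2 * (n : ℂ) + 1) * z)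

/-- Jacobi theta function θ₂(z,τ), with nome `q = exp(iπτ)`. -/
noncomputable def theta2 (z τ : ℂ) : ℂ :=
  ∑' n : ℤ, Complex.exp ((Real.pi : ℂ) * I * τ * ((n : ℂ) + 1 / 2) ^ 2) *
    Complex.exp (I * (2 * (n : ℂ) + 1) * z)

/-- Jacobi theta function θ₃(z,τ), with nome `q = exp(iπτ)`. -/
noncomputable def theta3 (z τ : ℂ) : ℂ :=
  ∑' n : ℤ, Complex.exp ((Real.pi : ℂ) * I * τ * (n : ℂ) ^ 2) *
    Complex.exp (2 * I * (n : ℂ) * z)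

/-- Jacobi theta function θ₄(z,τ), with nome `q = exp(iπτ)`. -/
noncomputable def theta4 (z τ : ℂ) : ℂ :=
  ∑' n : ℤ, (-1 : ℂ) ^ n * Complex.exp ((Real.pi : ℂ) * I * τ * (n : ℂ) ^ 2) *
    Complex.exp (2 * I * (n : ℂ) * z)

/-!
The signs in `θ₁` and `θ₄` come from translating `θ₂` and `θ₃` by the half-period `π / 2`, so it
suffices to expand `θ₃(u, τ) θ₃(v, τ)`. In that double series over `(m, n)`, write `m = a + b` and
`n = a - b`, with `a`, `b` both in `ℤ` or both in `ℤ + 1/2` according to the parity of `m + n`.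
Since `m² + n² = 2a² + 2b²` and `mu + nv = a(u + v) + b(u - v)`, each parity class factors: the
first gives `θ₃(u + v, 2τ) θ₃(u - v, 2τ)`, the second `θ₂(u + v, 2τ) θ₂(u - v, 2τ)`.
-/

/-- The parametrisation of `ℤ × ℤ` by sums and differences, which splits a double series into the
pairs of equal parity `(a + b, a - b)` and those of opposite parity `(a + b + 1, a - b)`. -/
noncomputable def sumDiffEquiv : (ℤ × ℤ) ⊕ (ℤ × ℤ) ≃ ℤ × ℤ :=
  Equiv.ofBijective
    (Sum.elim (fun p => (p.1 + p.2, p.1 - p.2)) (fun p => (p.1 + p.2 + 1, p.1 - p.2))) <| by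
  constructor
  · rintro (⟨a, b⟩ | ⟨a, b⟩) (⟨c, d⟩ | ⟨c, d⟩) h <;>
      simp only [Sum.elim_inl, Sum.elim_inr, Prod.mk.injEq] at h <;>
      simp only [Sum.inl.injEq, Sum.inr.injEq, Prod.mk.injEq, reduceCtorEq] <;> omega
  · rintro ⟨m, n⟩
    rcases Int.even_or_odd' (m + n) with ⟨k, hk | hk⟩
    · refine ⟨Sum.inl (k, m - k), ?_⟩
      simp only [Sum.elim_inl, Prod.mk.injEq]
      omega
    · refine ⟨Sum.inr (k, m - k - 1), ?_⟩
      simp only [Sum.elim_inr, Prod.mk.injEq]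
      omega

theorem tsum_int_prod_eq_sumDiff {E : Type*} [AddCommGroup E] [UniformSpace E]
    [IsUniformAddGroup E] [CompleteSpace E] [T2Space E] {f : ℤ × ℤ → E} (hf : Summable f) :
    ∑' p, f p = ∑' p : ℤ × ℤ, f (p.1 + p.2, p.1 - p.2) +
      ∑' p : ℤ × ℤ, f (p.1 + p.2 + 1, p.1 - p.2) := by
  have hs := sumDiffEquiv.summable_iff.2 hf
  rw [← sumDiffEquiv.tsum_eq]
  exact (hs.comp_injective Sum.inl_injective).tsum_sum (hs.comp_injective Sum.inr_injective)

/-- The term `q ^ (c ^ 2) * exp (2icz)`, with nome `q = exp(iπτ)`, of a theta series; the exponent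
`c` is complex so as to cover the integers and half-integers at once. -/
noncomputable def thetaTerm (c z τ : ℂ) : ℂ :=
  exp (Real.pi * I * τ * c ^ 2 + 2 * I * c * z)

/-- The theta function with characteristic `c`, the sum of `thetaTerm` over the coset `ℤ + c`.
It is `theta3` for `c = 0` and `theta2` for `c = 1 / 2`. -/
noncomputable def thetaChar (c z τ : ℂ) : ℂ :=
  ∑' n : ℤ, thetaTerm (n + c) z τ

theorem thetaTerm_add (a c z τ : ℂ) :
    thetaTerm (a + c) z τ = thetaTerm c z τ * thetaTerm a (z + Real.pi * τ * c) τ := by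
  simp only [thetaTerm, ← exp_add]
  ring_nf

theorem thetaTerm_add_mul_thetaTerm_sub (a b u v τ : ℂ) :
    thetaTerm (a + b) u τ * thetaTerm (a - b) v τ =
      thetaTerm a (u + v) (2 * τ) * thetaTerm b (u - v) (2 * τ) := by
  simp only [thetaTerm, ← exp_add]
  ring_nf

theorem thetaTerm_eq_jacobiTheta₂_term (n : ℤ) (z τ : ℂ) :
    thetaTerm n z τ = jacobiTheta₂_term n (z / Real.pi) τ := by
  have hπ : (Real.pi : ℂ) ≠ 0 := ofReal_ne_zero.2 Real.pi_ne_zero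
  rw [thetaTerm, jacobiTheta₂_term]
  congr 1
  field_simp
  ring

theorem summable_norm_thetaTerm (c z : ℂ) {τ : ℂ} (hτ : 0 < τ.im) :
    Summable fun n : ℤ => ‖thetaTerm (n + c) z τ‖ := by
  simp only [thetaTerm_add, thetaTerm_eq_jacobiTheta₂_term]
  exact (((summable_jacobiTheta₂_term_iff _ τ).2 hτ).mul_left _).norm

theorem hasSum_thetaChar_mul_thetaChar (c d u v : ℂ) {τ : ℂ} (hτ : 0 < τ.im) :
    HasSum (fun p : ℤ × ℤ => thetaTerm (p.1 + c) u τ * thetaTerm (p.2 + d) v τ)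
      (thetaChar c u τ * thetaChar d v τ) := by
  have hu := summable_norm_thetaTerm c u hτ
  have hv := summable_norm_thetaTerm d v hτ
  have hsum := summable_mul_of_summable_norm hu hv
  rw [thetaChar, thetaChar, tsum_mul_tsum_of_summable_norm hu hv]
  exact hsum.hasSum

theorem thetaChar_mul_thetaChar (c d u v : ℂ) {τ : ℂ} (hτ : 0 < τ.im) :
    thetaChar c u τ * thetaChar d v τ =
      thetaChar ((c + d) / 2) (u + v) (2 * τ) * thetaChar ((c - d) / 2) (u - v) (2 * τ) +
      thetaChar ((c + d + 1) / 2) (u + v) (2 * τ) *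
        thetaChar ((c - d + 1) / 2) (u - v) (2 * τ) := by
  have h2τ : 0 < (2 * τ).im := by simpa using hτ
  have hprod := hasSum_thetaChar_mul_thetaChar c d u v hτ
  rw [← hprod.tsum_eq, tsum_int_prod_eq_sumDiff hprod.summable,
    ← (hasSum_thetaChar_mul_thetaChar _ _ _ _ h2τ).tsum_eq,
    ← (hasSum_thetaChar_mul_thetaChar _ _ _ _ h2τ).tsum_eq]
  congr 1 <;> refine tsum_congr fun p => ?_ <;> rw [← thetaTerm_add_mul_thetaTerm_sub] <;>
    congr 2 <;> push_cast <;> ring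

theorem thetaChar_add_pi (c z τ : ℂ) :
    thetaChar c (z + Real.pi) τ = exp (2 * Real.pi * I * c) * thetaChar c z τ := by
  rw [thetaChar, thetaChar, ← tsum_mul_left]
  refine tsum_congr fun n => ?_
  have hperiod : exp (n * (2 * Real.pi * I)) = 1 := exp_int_mul_two_pi_mul_I n
  rw [← one_mul (exp (2 * Real.pi * I * c)), ← hperiod, thetaTerm, thetaTerm, ← exp_add, ← exp_add]
  ring_nf

theorem theta3_eq_thetaChar (z τ : ℂ) : theta3 z τ = thetaChar 0 z τ := by
  simp only [theta3, thetaChar, thetaTerm, add_zero, exp_add]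

theorem theta2_eq_thetaChar (z τ : ℂ) : theta2 z τ = thetaChar (1 / 2) z τ := by
  refine tsum_congr fun n => ?_
  rw [thetaTerm, exp_add]
  ring_nf

theorem theta3_mul_theta3 (u v : ℂ) {τ : ℂ} (hτ : 0 < τ.im) :
    theta3 u τ * theta3 v τ =
      theta3 (u + v) (2 * τ) * theta3 (u - v) (2 * τ) +
      theta2 (u + v) (2 * τ) * theta2 (u - v) (2 * τ) := by
  simpa only [theta3_eq_thetaChar, theta2_eq_thetaChar, add_zero, sub_zero, zero_add, zero_div]
    using thetaChar_mul_thetaChar 0 0 u v hτ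

theorem theta3_periodic (τ : ℂ) : Function.Periodic (theta3 · τ) (Real.pi : ℂ) := fun z => by
  simp only [theta3_eq_thetaChar, thetaChar_add_pi, mul_zero, exp_zero, one_mul]

theorem theta2_antiperiodic (τ : ℂ) :
    Function.Antiperiodic (theta2 · τ) (Real.pi : ℂ) := fun z => by
  have hexp : exp (2 * Real.pi * I * (1 / 2)) = -1 := by
    rw [← exp_pi_mul_I]
    ring_nf
  simp only [theta2_eq_thetaChar, thetaChar_add_pi, hexp, neg_one_mul]

theorem theta3_add_pi_div_two (z τ : ℂ) : theta3 (z + Real.pi / 2) τ = theta4 z τ := by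
  refine tsum_congr fun n => ?_
  rw [← exp_pi_mul_I, ← exp_int_mul, ← exp_add, ← exp_add, ← exp_add]
  ring_nf

theorem theta2_add_pi_div_two (z τ : ℂ) : theta2 (z + Real.pi / 2) τ = -theta1 z τ := by
  rw [theta2, theta1, neg_mul, neg_neg, ← tsum_mul_left]
  refine tsum_congr fun n => ?_
  have hphase : exp (I * (2 * n + 1) * (z + Real.pi / 2)) =
      I * ((-1) ^ n * exp (I * (2 * n + 1) * z)) :=
    calc
      exp (I * (2 * n + 1) * (z + Real.pi / 2))
      _ = exp (Real.pi / 2 * I + (n * (Real.pi * I) + I * (2 * n + 1) * z)) := by ring_nf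
      _ = I * ((-1) ^ n * exp (I * (2 * n + 1) * z)) := by
        rw [exp_add, exp_add, exp_int_mul, exp_pi_mul_I, exp_pi_div_two_mul_I]
  rw [hphase]
  ring

theorem theta3_sub_pi_div_two (z τ : ℂ) : theta3 (z - Real.pi / 2) τ = theta4 z τ := by
  have hz : z - Real.pi / 2 + Real.pi = z + Real.pi / 2 := by ring
  rw [← theta3_add_pi_div_two, ← hz]
  exact (theta3_periodic τ _).symm

theorem theta2_sub_pi_div_two (z τ : ℂ) : theta2 (z - Real.pi / 2) τ = theta1 z τ := by
  have hz : z - Real.pi / 2 + Real.pi = z + Real.pi / 2 := by ring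
  rw [← neg_inj, ← theta2_add_pi_div_two, ← hz]
  exact (theta2_antiperiodic τ _).symm

theorem theta_product_identity_halved (τ : ℂ) (hτ : 0 < τ.im) (x y : ℂ) :
    theta3 ((x + y) / 2) (τ / 2) * theta4 ((x - y) / 2) (τ / 2) =
      theta4 x τ * theta4 y τ - theta1 x τ * theta1 y τ := by
  have hτ2 : 0 < (τ / 2).im := by simpa using hτ
  have hadd : (x + y) / 2 + ((x - y) / 2 + Real.pi / 2) = x + Real.pi / 2 := by ring
  have hsub : (x + y) / 2 - ((x - y) / 2 + Real.pi / 2) = y - Real.pi / 2 := by ring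
  rw [← theta3_add_pi_div_two, theta3_mul_theta3 _ _ hτ2, hadd, hsub, mul_div_cancel₀ τ two_ne_zero,
    theta3_add_pi_div_two, theta3_sub_pi_div_two, theta2_add_pi_div_two, theta2_sub_pi_div_two]
  ring
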